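/- Solving cubics via RNM: Let p(z) = a₃z³ + a₂z² + a₁z + a₀ be a cubic polynomial with complex coefficients (a₃ ≠ 0), and let c be a critical point of p (p'(c) = 0) such that |p(c)| ≤ |p(w)| for every critical point w of p. Then the RNM orbit of c converges to a root of p, i.e., there exists θ* ∈ ℂ with p(θ*) = 0 such that the RNM iterates starting at c converge to θ*. -/

import Mathlib

open Polynomial Filter Topology
open scoped Classical

noncomputable section

/-- The `j`-th derivative of `p`, evaluated at `z`. -/
def dEval (p : Polynomial ℂ) (j : ℕ) (z : ℂ) : ℂ :=
  (Polynomial.derivative^[j] p).eval z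

/-- The index `k(z) = min {j ≥ 1 : p^{(j)}(z) ≠ 0}`. -/
def kIndex (p : Polynomial ℂ) (z : ℂ) : ℕ :=
  sInf {j : ℕ | 1 ≤ j ∧ dEval p j z ≠ 0}

/-- `A(z) = max {|p^{(j)}(z)|/j! : j = 0, …, n}`, where `n` is the degree of `p`. -/
def Amax (p : Polynomial ℂ) (z : ℂ) : ℝ :=
  (Finset.range (p.natDegree + 1)).sup' Finset.nonempty_range_add_one
    (fun j => ‖dEval p j z‖ / (Nat.factorial j))

/-- `u_m = (1/m!) · p(z) · conj(p^{(m)}(z))`. -/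
def uPar (p : Polynomial ℂ) (m : ℕ) (z : ℂ) : ℂ :=
  (1 / (Nat.factorial m : ℂ)) * p.eval z * (starRingEnd ℂ) (dEval p m z)

/-- `γ = 2 · Re(u_m^(m-1))`. -/
def gammaPar (p : Polynomial ℂ) (m : ℕ) (z : ℂ) : ℝ :=
  2 * ((uPar p m z) ^ (m - 1)).re

/-- `δ = -2 · Im(u_m^(m-1))`. -/
def deltaPar (p : Polynomial ℂ) (m : ℕ) (z : ℂ) : ℝ :=
  -2 * ((uPar p m z) ^ (m - 1)).im

/-- `c_m = max {|γ|, |δ|}`. -/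
def cPar (p : Polynomial ℂ) (m : ℕ) (z : ℂ) : ℝ :=
  max |gammaPar p m z| |deltaPar p m z|

/-- The angle `θ`: `0` if `c = |γ|, γ < 0`; `π/m` if `c = |γ|, γ > 0`;
`π/(2m)` if `c = |δ|, δ < 0`; `3π/(2m)` if `c = |δ|, δ > 0`. -/
def thetaPar (p : Polynomial ℂ) (m : ℕ) (z : ℂ) : ℝ :=
  if cPar p m z = |gammaPar p m z| then
    if gammaPar p m z < 0 then 0 else Real.pi / m
  else
    if deltaPar p m z < 0 then Real.pi / (2 * m) else 3 * Real.pi / (2 * m)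

/-- `C_m = c_m · |u_m|^(2-m) / (6 · A(z)²)`. -/
def CPar (p : Polynomial ℂ) (m : ℕ) (z : ℂ) : ℝ :=
  cPar p m z * ‖uPar p m z‖ ^ ((2 : ℤ) - (m : ℤ)) / (6 * (Amax p z) ^ 2)

/-- The Robust Newton iterate with prescribed index `m`:
`z + (C_m/3) · (u_m/|u_m|) · e^(iθ)`. -/
def rniWith (p : Polynomial ℂ) (m : ℕ) (z : ℂ) : ℂ :=
  z + (↑(CPar p m z / 3) : ℂ) * (uPar p m z / (↑(‖uPar p m z‖) : ℂ)) *
    Complex.exp ((↑(thetaPar p m z) : ℂ) * Complex.I)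

/-- The Robust Newton iterate `N̂_p(z)`. -/
def RN (p : Polynomial ℂ) (z : ℂ) : ℂ := rniWith p (kIndex p z) z

/-- The RNM orbit of the seed `z₀`: `z_{t+1} = N̂_p(z_t)` when `p(z_t) ≠ 0`,
and `z_{t+1} = z_t` when `p(z_t) = 0`. -/
def rnmOrbit (p : Polynomial ℂ) (z₀ : ℂ) : ℕ → ℂ
  | 0 => z₀
  | t + 1 =>
      if p.eval (rnmOrbit p z₀ t) = 0 then rnmOrbit p z₀ t
      else RN p (rnmOrbit p z₀ t)

/-!
Write `h = N̂_p(z) - z`, `k = k(z)` and let `aⱼ = p^{(j)}(z)/j!` be the Taylor coefficients at `z`.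
The angle `θ` makes the leading Taylor term `a_k h^k` point away from `p(z)` by at least `120°`,
and `|h| ≤ |p(z)| |a_k| / (9 A(z)²)` makes it dominate the Taylor remainder, so that
`|p(z + h)| ≤ |p(z)| - |a_k| |h|^k / 4`.

If no critical point has smaller modulus than the seed, then after one step the orbit lives in a
compact sublevel set of `|p|` without critical points. There `k = 1`, and by compactness `|p|`
decreases by a uniform factor at each step, while the steps are `O(|p|)`: the orbit is a Cauchy
sequence and its limit is a root.
-/

section GeneralLemmas

theorem pow_sub_one_mul_zpow_two_sub {G₀ : Type*} [GroupWithZero G₀] {x : G₀} (hx : x ≠ 0)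
    {m : ℕ} (hm : m ≠ 0) : x ^ (m - 1) * x ^ ((2 : ℤ) - m) = x := by
  rw [← zpow_natCast, ← zpow_add₀ hx, Nat.cast_pred hm.bot_lt]
  norm_num

theorem norm_eval_sub_leading_terms_le {R : Type*} [SeminormedRing R] {q : R[X]} {m : ℕ}
    (hm : m ≠ 0) (hlow : ∀ j, 0 < j → j < m → q.coeff j = 0) {A : ℝ}
    (hA : ∀ j, m < j → ‖q.coeff j‖ ≤ A) {x : R} (hx : ‖x‖ < 1) :
    ‖q.eval x - (q.coeff 0 + q.coeff m * x ^ m)‖ ≤ A * (‖x‖ ^ (m + 1) / (1 - ‖x‖)) := by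
  have hA0 : 0 ≤ A := (norm_nonneg _).trans (hA (m + 1) m.lt_succ_self)
  set N := q.natDegree + m + 1
  have htail : q.eval x - (q.coeff 0 + q.coeff m * x ^ m) =
      ∑ j ∈ Finset.Ico (m + 1) N, q.coeff j * x ^ j := by
    have hhead : ∑ j ∈ Finset.range m, q.coeff j * x ^ j = q.coeff 0 := by
      rw [Finset.sum_eq_single_of_mem 0 (Finset.mem_range.mpr hm.bot_lt)
        fun j hj hj0 => by rw [hlow j hj0.bot_lt (Finset.mem_range.mp hj), zero_mul]]
      simp
    rw [eval_eq_sum_range' (by lia : q.natDegree < N),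
      ← Finset.sum_range_add_sum_Ico _ (by lia : m + 1 ≤ N), Finset.sum_range_succ, hhead,
      add_sub_cancel_left]
  calc ‖q.eval x - (q.coeff 0 + q.coeff m * x ^ m)‖
      ≤ ∑ j ∈ Finset.Ico (m + 1) N, A * ‖x‖ ^ j := by
        rw [htail]
        refine norm_sum_le_of_le _ fun j hj => ?_
        have hmj : m < j := (Finset.mem_Ico.mp hj).1
        calc ‖q.coeff j * x ^ j‖ ≤ ‖q.coeff j‖ * ‖x ^ j‖ := norm_mul_le _ _
          _ ≤ A * ‖x‖ ^ j := by
            gcongr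
            exacts [hA j hmj, norm_pow_le' x (by lia)]
    _ ≤ A * (‖x‖ ^ (m + 1) / (1 - ‖x‖)) := by
        rw [← Finset.mul_sum]
        gcongr
        exact geom_sum_Ico_le_of_lt_one (norm_nonneg x) hx

open scoped InnerProductSpace in
theorem norm_add_le_of_inner_le {E : Type*} [NormedAddCommGroup E] [InnerProductSpace ℝ E]
    {x y : E} (hinner : ⟪x, y⟫_ℝ ≤ -(‖x‖ * ‖y‖) / 2) (hyx : 9 * ‖y‖ ≤ ‖x‖) :
    ‖x + y‖ ≤ ‖x‖ - 4 / 9 * ‖y‖ := by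
  have hy : 0 ≤ ‖y‖ := norm_nonneg y
  refine le_of_sq_le_sq ?_ (by linarith)
  rw [norm_add_sq_real]
  nlinarith

theorem exists_tendsto_iterate_of_norm_contraction {X E : Type*} [PseudoMetricSpace X]
    [CompleteSpace X] [NormedAddCommGroup E] {f : X → X} {g : X → E} (hg : Continuous g)
    {s : Set X} (hs : Set.MapsTo f s s) {q B : ℝ} (hq0 : 0 ≤ q) (hq1 : q < 1) (hB : 0 ≤ B)
    (hcontr : ∀ x ∈ s, ‖g (f x)‖ ≤ q * ‖g x‖) (hdist : ∀ x ∈ s, dist x (f x) ≤ B * ‖g x‖)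
    {x₀ : X} (hx₀ : x₀ ∈ s) :
    ∃ y, g y = 0 ∧ Tendsto (fun t => f^[t] x₀) atTop (𝓝 y) := by
  have hmem (t : ℕ) : f^[t] x₀ ∈ s := hs.iterate t hx₀
  have hdecay (t : ℕ) : ‖g (f^[t] x₀)‖ ≤ ‖g x₀‖ * q ^ t := by
    induction t with
    | zero => simp
    | succ t ih =>
      rw [Function.iterate_succ_apply']
      calc ‖g (f (f^[t] x₀))‖ ≤ q * ‖g (f^[t] x₀)‖ := hcontr _ (hmem t)
        _ ≤ q * (‖g x₀‖ * q ^ t) := by gcongr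
        _ = ‖g x₀‖ * q ^ (t + 1) := by ring
  have hcauchy : CauchySeq fun t => f^[t] x₀ := by
    refine cauchySeq_of_le_geometric q (B * ‖g x₀‖) hq1 fun t => ?_
    rw [Function.iterate_succ_apply']
    calc dist (f^[t] x₀) (f (f^[t] x₀)) ≤ B * ‖g (f^[t] x₀)‖ := hdist _ (hmem t)
      _ ≤ B * (‖g x₀‖ * q ^ t) := by gcongr; exact hdecay t
      _ = B * ‖g x₀‖ * q ^ t := by ring
  obtain ⟨y, hy⟩ := cauchySeq_tendsto_of_complete hcauchy
  have hzero : Tendsto (fun t => g (f^[t] x₀)) atTop (𝓝 0) := by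
    refine squeeze_zero_norm hdecay ?_
    simpa using (tendsto_pow_atTop_nhds_zero_of_lt_one hq0 hq1).const_mul ‖g x₀‖
  exact ⟨y, tendsto_nhds_unique ((hg.tendsto y).comp hy) hzero, hy⟩

end GeneralLemmas

section TaylorCoefficients

variable (p : ℂ[X]) (z : ℂ)

theorem dEval_eq_factorial_mul_coeff_taylor (j : ℕ) :
    dEval p j z = j.factorial * (taylor z p).coeff j := by
  rw [dEval, ← factorial_smul_hasseDeriv, taylor_coeff]
  simp

theorem uPar_eq_eval_mul_conj_coeff_taylor (m : ℕ) :
    uPar p m z = p.eval z * starRingEnd ℂ ((taylor z p).coeff m) := by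
  have hfac : (m.factorial : ℂ) ≠ 0 := mod_cast m.factorial_ne_zero
  rw [uPar, dEval_eq_factorial_mul_coeff_taylor, map_mul, Complex.conj_natCast]
  field_simp

theorem norm_uPar (m : ℕ) : ‖uPar p m z‖ = ‖p.eval z‖ * ‖(taylor z p).coeff m‖ := by
  rw [uPar_eq_eval_mul_conj_coeff_taylor, norm_mul, RCLike.norm_conj]

theorem Amax_eq_sup'_norm_coeff_taylor :
    Amax p z = (Finset.range (p.natDegree + 1)).sup' Finset.nonempty_range_add_one
      fun j => ‖(taylor z p).coeff j‖ := by
  refine Finset.sup'_congr _ rfl fun j _ => ?_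
  have hfac : (j.factorial : ℝ) ≠ 0 := mod_cast j.factorial_ne_zero
  rw [dEval_eq_factorial_mul_coeff_taylor, norm_mul, Complex.norm_natCast]
  field_simp

theorem norm_coeff_taylor_le_Amax (j : ℕ) : ‖(taylor z p).coeff j‖ ≤ Amax p z := by
  rw [Amax_eq_sup'_norm_coeff_taylor]
  obtain hj | hj := le_or_gt j p.natDegree
  · exact Finset.le_sup' (fun j => ‖(taylor z p).coeff j‖) (Finset.mem_range_succ_iff.mpr hj)
  · rw [coeff_eq_zero_of_natDegree_lt (by rwa [natDegree_taylor]), norm_zero]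
    exact (norm_nonneg _).trans <| Finset.le_sup' (fun j => ‖(taylor z p).coeff j‖)
      (Finset.mem_range_succ_iff.mpr p.natDegree.zero_le)

theorem norm_eval_le_Amax : ‖p.eval z‖ ≤ Amax p z := by
  simpa using norm_coeff_taylor_le_Amax p z 0

theorem norm_eval_derivative_le_Amax : ‖p.derivative.eval z‖ ≤ Amax p z := by
  simpa using norm_coeff_taylor_le_Amax p z 1

theorem norm_leadingCoeff_le_Amax : ‖p.leadingCoeff‖ ≤ Amax p z := by
  simpa using norm_coeff_taylor_le_Amax p z p.natDegree

variable {p} in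
theorem Amax_pos (hp : p ≠ 0) : 0 < Amax p z :=
  (norm_pos_iff.mpr (leadingCoeff_ne_zero.mpr hp)).trans_le (norm_leadingCoeff_le_Amax p z)

theorem continuous_Amax : Continuous (Amax p) :=
  Continuous.finset_sup'_apply _ fun j _ =>
    ((derivative^[j] p).continuous.norm).div_const _

end TaylorCoefficients

section LeadingIndex

variable {p : ℂ[X]} {z : ℂ}

theorem kIndex_eq_sInf_coeff_taylor :
    kIndex p z = sInf {j : ℕ | 1 ≤ j ∧ (taylor z p).coeff j ≠ 0} := by
  simp [kIndex, dEval_eq_factorial_mul_coeff_taylor, Nat.factorial_ne_zero]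

theorem coeff_taylor_eq_zero_of_lt_kIndex {j : ℕ} (hj : 0 < j) (hjk : j < kIndex p z) :
    (taylor z p).coeff j = 0 := by
  rw [kIndex_eq_sInf_coeff_taylor] at hjk
  by_contra hne
  exact Nat.notMem_of_lt_sInf hjk ⟨hj, hne⟩

theorem kIndex_mem (hp : 0 < p.natDegree) :
    1 ≤ kIndex p z ∧ (taylor z p).coeff (kIndex p z) ≠ 0 := by
  rw [kIndex_eq_sInf_coeff_taylor]
  refine Nat.sInf_mem (s := {j | 1 ≤ j ∧ (taylor z p).coeff j ≠ 0}) ⟨p.natDegree, hp, ?_⟩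
  rw [coeff_taylor_natDegree]
  exact leadingCoeff_ne_zero.mpr (ne_zero_of_natDegree_gt hp)

theorem uPar_kIndex_ne_zero (hp : 0 < p.natDegree) (hz : p.eval z ≠ 0) :
    uPar p (kIndex p z) z ≠ 0 := by
  rw [← norm_ne_zero_iff, norm_uPar]
  exact mul_ne_zero (norm_ne_zero_iff.mpr hz) (norm_ne_zero_iff.mpr (kIndex_mem hp).2)

theorem kIndex_eq_one (hz : p.derivative.eval z ≠ 0) : kIndex p z = 1 := by
  have hmem : 1 ∈ {j : ℕ | 1 ≤ j ∧ (taylor z p).coeff j ≠ 0} := ⟨le_rfl, by simpa using hz⟩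
  rw [kIndex_eq_sInf_coeff_taylor]
  exact le_antisymm (Nat.sInf_le hmem) (Nat.sInf_mem ⟨1, hmem⟩).1

end LeadingIndex

section Step

variable {p : ℂ[X]} {m : ℕ} {z : ℂ}

theorem norm_uPar_pow_le_cPar : ‖uPar p m z‖ ^ (m - 1) ≤ cPar p m z := by
  set x := uPar p m z ^ (m - 1) with hx
  have hre : 2 * |x.re| ≤ cPar p m z :=
    (le_max_left _ _).trans' (by simp [gammaPar, abs_mul, ← hx])
  have him : 2 * |x.im| ≤ cPar p m z :=
    (le_max_right _ _).trans' (by simp [deltaPar, abs_mul, ← hx])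
  rw [← norm_pow]
  linarith [Complex.norm_le_abs_re_add_abs_im x]

theorem cPar_le_two_mul_norm_uPar_pow : cPar p m z ≤ 2 * ‖uPar p m z‖ ^ (m - 1) := by
  rw [← norm_pow]
  refine max_le ?_ ?_
  · simpa [gammaPar, abs_mul] using Complex.abs_re_le_norm (uPar p m z ^ (m - 1))
  · simpa [deltaPar, abs_mul] using Complex.abs_im_le_norm (uPar p m z ^ (m - 1))

theorem exp_thetaPar_mul_I_pow (hm : m ≠ 0) :
    Complex.exp (thetaPar p m z * Complex.I) ^ m =
      if cPar p m z = |gammaPar p m z| then if gammaPar p m z < 0 then 1 else -1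
      else if deltaPar p m z < 0 then Complex.I else -Complex.I := by
  have hm' : (m : ℂ) ≠ 0 := mod_cast hm
  rw [← Complex.exp_nat_mul, thetaPar]
  split_ifs
  · simp
  · refine (congrArg Complex.exp ?_).trans Complex.exp_pi_mul_I
    push_cast
    field_simp
  · refine (congrArg Complex.exp ?_).trans Complex.exp_pi_div_two_mul_I
    push_cast
    field_simp
  · have hneg : Complex.exp (Real.pi * Complex.I + Real.pi / 2 * Complex.I) = -Complex.I := by
      rw [Complex.exp_add, Complex.exp_pi_mul_I, Complex.exp_pi_div_two_mul_I, neg_one_mul]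
    refine (congrArg Complex.exp ?_).trans hneg
    push_cast
    field_simp
    ring

theorem re_uPar_pow_mul_exp_thetaPar_pow (hm : m ≠ 0) :
    (uPar p m z ^ (m - 1) * Complex.exp (thetaPar p m z * Complex.I) ^ m).re =
      -cPar p m z / 2 := by
  have hγ : gammaPar p m z = 2 * (uPar p m z ^ (m - 1)).re := rfl
  have hδ : deltaPar p m z = -2 * (uPar p m z ^ (m - 1)).im := rfl
  rw [exp_thetaPar_mul_I_pow hm]
  split_ifs with hc hneg hneg
  · rw [hc, abs_of_neg hneg, mul_one]
    linarith
  · rw [hc, abs_of_nonneg (not_lt.mp hneg), mul_neg_one, Complex.neg_re]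
    linarith
  all_goals have hc' : cPar p m z = |deltaPar p m z| := (max_choice _ _).resolve_left hc
  · rw [hc', abs_of_neg hneg, Complex.mul_I_re]
    linarith
  · rw [hc', abs_of_nonneg (not_lt.mp hneg), mul_neg, Complex.neg_re, Complex.mul_I_re]
    linarith

theorem norm_uPar_div_le_CPar (hm : m ≠ 0) (hu : uPar p m z ≠ 0) :
    ‖uPar p m z‖ / (6 * Amax p z ^ 2) ≤ CPar p m z := by
  set u := uPar p m z
  calc ‖u‖ / (6 * Amax p z ^ 2)
      = ‖u‖ ^ (m - 1) * ‖u‖ ^ ((2 : ℤ) - m) / (6 * Amax p z ^ 2) := by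
        rw [pow_sub_one_mul_zpow_two_sub (norm_ne_zero_iff.mpr hu) hm]
    _ ≤ CPar p m z := by
        rw [CPar]
        gcongr
        exact norm_uPar_pow_le_cPar

theorem CPar_le_norm_uPar_div (hm : m ≠ 0) (hu : uPar p m z ≠ 0) :
    CPar p m z ≤ ‖uPar p m z‖ / (3 * Amax p z ^ 2) := by
  set u := uPar p m z
  calc CPar p m z
      ≤ 2 * ‖u‖ ^ (m - 1) * ‖u‖ ^ ((2 : ℤ) - m) / (6 * Amax p z ^ 2) := by
        rw [CPar]
        gcongr
        exact cPar_le_two_mul_norm_uPar_pow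
    _ = ‖u‖ / (3 * Amax p z ^ 2) := by
        rw [mul_assoc, pow_sub_one_mul_zpow_two_sub (norm_ne_zero_iff.mpr hu) hm]
        ring

theorem CPar_nonneg : 0 ≤ CPar p m z :=
  div_nonneg (mul_nonneg ((abs_nonneg _).trans (le_max_left _ _)) (by positivity)) (by positivity)

theorem rniWith_sub_self :
    rniWith p m z - z = ((CPar p m z / 3 : ℝ) : ℂ) * (uPar p m z / (‖uPar p m z‖ : ℂ)) *
      Complex.exp (thetaPar p m z * Complex.I) :=
  add_sub_cancel_left _ _

theorem norm_rniWith_sub_self (hu : uPar p m z ≠ 0) :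
    ‖rniWith p m z - z‖ = CPar p m z / 3 := by
  rw [rniWith_sub_self, norm_mul, norm_mul, norm_div, Complex.norm_exp_ofReal_mul_I,
    Complex.norm_real, Complex.norm_real, norm_norm, div_self (norm_ne_zero_iff.mpr hu), mul_one,
    mul_one, Real.norm_of_nonneg (div_nonneg CPar_nonneg zero_le_three)]

theorem norm_uPar_div_le_norm_rniWith_sub_self (hm : m ≠ 0) (hu : uPar p m z ≠ 0) :
    ‖uPar p m z‖ / (18 * Amax p z ^ 2) ≤ ‖rniWith p m z - z‖ := by
  rw [norm_rniWith_sub_self hu]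
  refine (div_le_div_of_nonneg_right (norm_uPar_div_le_CPar hm hu) zero_le_three).trans_eq' ?_
  ring

theorem norm_rniWith_sub_self_le (hm : m ≠ 0) (hu : uPar p m z ≠ 0) :
    ‖rniWith p m z - z‖ ≤ ‖uPar p m z‖ / (9 * Amax p z ^ 2) := by
  rw [norm_rniWith_sub_self hu]
  refine (div_le_div_of_nonneg_right (CPar_le_norm_uPar_div hm hu) zero_le_three).trans_eq ?_
  ring

end Step

section Descent

variable {p : ℂ[X]} {m : ℕ} {z : ℂ}

theorem re_rniWith_sub_self_pow_mul_conj_uPar_le (hm : m ≠ 0) (hu : uPar p m z ≠ 0) :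
    ((rniWith p m z - z) ^ m * starRingEnd ℂ (uPar p m z)).re ≤
      -(‖uPar p m z‖ * ‖rniWith p m z - z‖ ^ m) / 2 := by
  set r := CPar p m z / 3
  set u := uPar p m z
  set e := Complex.exp (thetaPar p m z * Complex.I)
  have hr : 0 ≤ r := div_nonneg CPar_nonneg zero_le_three
  have hstep : rniWith p m z - z = r * (u / (‖u‖ : ℂ)) * e := rniWith_sub_self
  have hrot : (rniWith p m z - z) ^ m * starRingEnd ℂ u =
      ((r ^ m * ‖u‖ ^ 2 / ‖u‖ ^ m : ℝ) : ℂ) * (u ^ (m - 1) * e ^ m) := by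
    push_cast
    rw [hstep, ← Complex.mul_conj' u, mul_pow, mul_pow, div_pow, ← mul_pow_sub_one hm u]
    ring
  have hpow : ‖u‖ ^ (m - 1) * ‖u‖ = ‖u‖ ^ m := pow_sub_one_mul hm _
  rw [hrot, Complex.re_ofReal_mul, re_uPar_pow_mul_exp_thetaPar_pow hm, norm_rniWith_sub_self hu]
  calc r ^ m * ‖u‖ ^ 2 / ‖u‖ ^ m * (-cPar p m z / 2)
      ≤ r ^ m * ‖u‖ ^ 2 / ‖u‖ ^ m * (-‖u‖ ^ (m - 1) / 2) := by
        gcongr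
        exact norm_uPar_pow_le_cPar
    _ = -(‖u‖ * r ^ m) / 2 := by
        rw [← hpow]
        field_simp

open scoped InnerProductSpace in
theorem inner_eval_leading_term_le (hm : m ≠ 0) (hu : uPar p m z ≠ 0) :
    ⟪p.eval z, (taylor z p).coeff m * (rniWith p m z - z) ^ m⟫_ℝ ≤
      -(‖p.eval z‖ * ‖(taylor z p).coeff m * (rniWith p m z - z) ^ m‖) / 2 := by
  refine (re_rniWith_sub_self_pow_mul_conj_uPar_le hm hu).trans' (le_of_eq ?_) |>.trans_eq ?_
  · rw [Complex.inner, uPar_eq_eval_mul_conj_coeff_taylor, map_mul, Complex.conj_conj]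
    ring_nf
  · rw [norm_uPar, norm_mul, norm_pow, mul_assoc]

theorem Amax_pos_of_uPar_ne_zero (hu : uPar p m z ≠ 0) : 0 < Amax p z :=
  Amax_pos z (by rintro rfl; simp [uPar] at hu)

theorem norm_rniWith_sub_self_mul_sq_Amax_le (hm : m ≠ 0) (hu : uPar p m z ≠ 0) :
    9 * ‖rniWith p m z - z‖ * Amax p z ^ 2 ≤ ‖p.eval z‖ * ‖(taylor z p).coeff m‖ := by
  have hA := Amax_pos_of_uPar_ne_zero hu
  have hle := norm_rniWith_sub_self_le hm hu
  rw [le_div_iff₀ (by positivity), norm_uPar] at hle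
  linarith

theorem norm_rniWith_sub_self_le_one_div_nine (hm : m ≠ 0) (hu : uPar p m z ≠ 0) :
    ‖rniWith p m z - z‖ ≤ 1 / 9 := by
  have hA := Amax_pos_of_uPar_ne_zero hu
  have hPa : ‖p.eval z‖ * ‖(taylor z p).coeff m‖ ≤ Amax p z * Amax p z :=
    mul_le_mul (norm_eval_le_Amax p z) (norm_coeff_taylor_le_Amax p z m) (norm_nonneg _) hA.le
  refine le_of_mul_le_mul_right ?_ (pow_pos hA 2)
  linarith [norm_rniWith_sub_self_mul_sq_Amax_le hm hu]

theorem Amax_mul_norm_rniWith_sub_self_le (hm : m ≠ 0) (hu : uPar p m z ≠ 0) :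
    Amax p z * ‖rniWith p m z - z‖ ≤ ‖(taylor z p).coeff m‖ / 9 := by
  have hA := Amax_pos_of_uPar_ne_zero hu
  refine le_of_mul_le_mul_right ?_ hA
  linarith [norm_rniWith_sub_self_mul_sq_Amax_le hm hu,
    mul_le_mul_of_nonneg_right (norm_eval_le_Amax p z) (norm_nonneg ((taylor z p).coeff m))]

theorem norm_leading_term_le (hm : m ≠ 0) (hu : uPar p m z ≠ 0) :
    ‖(taylor z p).coeff m * (rniWith p m z - z) ^ m‖ ≤ ‖p.eval z‖ / 9 := by
  set a := (taylor z p).coeff m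
  set h := rniWith p m z - z
  have hA := Amax_pos_of_uPar_ne_zero hu
  have hh : ‖h‖ ≤ 1 := (norm_rniWith_sub_self_le_one_div_nine hm hu).trans (by norm_num)
  have haA : ‖a‖ ^ 2 ≤ Amax p z ^ 2 := by
    gcongr
    exact norm_coeff_taylor_le_Amax p z m
  calc ‖a * h ^ m‖ = ‖a‖ * ‖h‖ ^ m := by rw [norm_mul, norm_pow]
    _ ≤ ‖a‖ * ‖h‖ := by gcongr; exact pow_le_of_le_one (norm_nonneg h) hh hm
    _ ≤ ‖p.eval z‖ / 9 := by
      refine le_of_mul_le_mul_right ?_ (pow_pos hA 2)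
      linarith [mul_le_mul_of_nonneg_left (norm_rniWith_sub_self_mul_sq_Amax_le hm hu)
        (norm_nonneg a), mul_le_mul_of_nonneg_left haA (norm_nonneg (p.eval z))]

theorem norm_taylor_remainder_le (hm : m ≠ 0)
    (hlow : ∀ j, 0 < j → j < m → (taylor z p).coeff j = 0) (hu : uPar p m z ≠ 0) :
    ‖p.eval (rniWith p m z) - (p.eval z + (taylor z p).coeff m * (rniWith p m z - z) ^ m)‖ ≤
      ‖(taylor z p).coeff m * (rniWith p m z - z) ^ m‖ / 8 := by
  have hh : ‖rniWith p m z - z‖ ≤ 1 / 9 := norm_rniWith_sub_self_le_one_div_nine hm hu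
  have hrem := norm_eval_sub_leading_terms_le hm hlow
    (fun j _ => norm_coeff_taylor_le_Amax p z j) (hh.trans_lt (by norm_num))
  rw [taylor_eval, sub_add_cancel, taylor_coeff_zero] at hrem
  refine hrem.trans ?_
  rw [norm_mul, norm_pow]
  set a := (taylor z p).coeff m
  set h := rniWith p m z - z
  calc Amax p z * (‖h‖ ^ (m + 1) / (1 - ‖h‖))
      = Amax p z * ‖h‖ * ‖h‖ ^ m / (1 - ‖h‖) := by ring
    _ ≤ ‖a‖ / 9 * ‖h‖ ^ m / (1 - 1 / 9) := by
        gcongr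
        exact Amax_mul_norm_rniWith_sub_self_le hm hu
    _ = ‖a‖ * ‖h‖ ^ m / 8 := by ring

theorem norm_eval_rniWith_le (hm : m ≠ 0)
    (hlow : ∀ j, 0 < j → j < m → (taylor z p).coeff j = 0) (hu : uPar p m z ≠ 0) :
    ‖p.eval (rniWith p m z)‖ ≤
      ‖p.eval z‖ - ‖(taylor z p).coeff m‖ * ‖rniWith p m z - z‖ ^ m / 4 := by
  rw [← norm_pow, ← norm_mul]
  set y := (taylor z p).coeff m * (rniWith p m z - z) ^ m
  have hlead : ‖p.eval z + y‖ ≤ ‖p.eval z‖ - 4 / 9 * ‖y‖ :=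
    norm_add_le_of_inner_le (inner_eval_leading_term_le hm hu)
      (by linarith [norm_leading_term_le hm hu])
  have hrem : ‖p.eval (rniWith p m z) - (p.eval z + y)‖ ≤ ‖y‖ / 8 :=
    norm_taylor_remainder_le hm hlow hu
  linarith [norm_sub_norm_le (p.eval (rniWith p m z)) (p.eval z + y), norm_nonneg y]

theorem norm_eval_RN_lt (hp : 0 < p.natDegree) (hz : p.eval z ≠ 0) :
    ‖p.eval (RN p z)‖ < ‖p.eval z‖ := by
  obtain ⟨hk, hak⟩ := kIndex_mem (z := z) hp
  have hk0 : kIndex p z ≠ 0 := Nat.one_le_iff_ne_zero.mp hk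
  have hu := uPar_kIndex_ne_zero hp hz
  have hA := Amax_pos_of_uPar_ne_zero hu
  have ha0 : 0 < ‖(taylor z p).coeff (kIndex p z)‖ := norm_pos_iff.mpr hak
  have hh0 : 0 < ‖RN p z - z‖ :=
    (norm_uPar_div_le_norm_rniWith_sub_self hk0 hu).trans_lt' (by positivity)
  refine (norm_eval_rniWith_le hk0 (fun _ => coeff_taylor_eq_zero_of_lt_kIndex) hu).trans_lt ?_
  exact sub_lt_self _ (div_pos (mul_pos ha0 (pow_pos hh0 _)) four_pos)

end Descent

section NoncriticalPoint

variable {p : ℂ[X]} {z : ℂ}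

theorem RN_eq_rniWith_one (hz' : p.derivative.eval z ≠ 0) : RN p z = rniWith p 1 z := by
  rw [RN, kIndex_eq_one hz']

theorem uPar_one_ne_zero (hz : p.eval z ≠ 0) (hz' : p.derivative.eval z ≠ 0) :
    uPar p 1 z ≠ 0 := by
  rw [← norm_ne_zero_iff, norm_uPar, taylor_coeff_one]
  exact mul_ne_zero (norm_ne_zero_iff.mpr hz) (norm_ne_zero_iff.mpr hz')

theorem norm_eval_RN_le_of_noncritical (hz : p.eval z ≠ 0) (hz' : p.derivative.eval z ≠ 0) :
    ‖p.eval (RN p z)‖ ≤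
      (1 - ‖p.derivative.eval z‖ ^ 2 / (72 * Amax p z ^ 2)) * ‖p.eval z‖ := by
  have hu := uPar_one_ne_zero hz hz'
  have hdescent := norm_eval_rniWith_le one_ne_zero (by lia) hu
  have hstep := norm_uPar_div_le_norm_rniWith_sub_self one_ne_zero hu
  rw [norm_uPar, taylor_coeff_one] at hstep
  rw [pow_one, taylor_coeff_one] at hdescent
  rw [RN_eq_rniWith_one hz']
  set b := p.derivative.eval z
  set h := rniWith p 1 z - z
  calc ‖p.eval (rniWith p 1 z)‖ ≤ ‖p.eval z‖ - ‖b‖ * ‖h‖ / 4 := hdescent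
    _ ≤ ‖p.eval z‖ - ‖b‖ * (‖p.eval z‖ * ‖b‖ / (18 * Amax p z ^ 2)) / 4 := by gcongr
    _ = (1 - ‖b‖ ^ 2 / (72 * Amax p z ^ 2)) * ‖p.eval z‖ := by ring

theorem norm_RN_sub_self_le_of_noncritical (hz : p.eval z ≠ 0) (hz' : p.derivative.eval z ≠ 0) :
    ‖RN p z - z‖ ≤ 1 / (9 * ‖p.leadingCoeff‖) * ‖p.eval z‖ := by
  have hu := uPar_one_ne_zero hz hz'
  have hA := Amax_pos_of_uPar_ne_zero hu
  have hlc : 0 < ‖p.leadingCoeff‖ := by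
    rw [norm_pos_iff, leadingCoeff_ne_zero]
    rintro rfl
    simp at hz
  have hstep := norm_rniWith_sub_self_le one_ne_zero hu
  rw [norm_uPar, taylor_coeff_one] at hstep
  rw [RN_eq_rniWith_one hz']
  calc ‖rniWith p 1 z - z‖
      ≤ ‖p.eval z‖ * ‖p.derivative.eval z‖ / (9 * Amax p z ^ 2) := hstep
    _ ≤ ‖p.eval z‖ * Amax p z / (9 * Amax p z ^ 2) := by
        gcongr
        exact norm_eval_derivative_le_Amax p z
    _ = 1 / (9 * Amax p z) * ‖p.eval z‖ := by field_simp
    _ ≤ 1 / (9 * ‖p.leadingCoeff‖) * ‖p.eval z‖ := by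
        gcongr
        exact norm_leadingCoeff_le_Amax p z

end NoncriticalPoint

section Orbit

variable {p : ℂ[X]}

/-- The self-map of `ℂ` whose iterates form the RNM orbits: the Robust Newton iterate, modified to
fix the roots of `p`. -/
def rnmStep (p : ℂ[X]) (z : ℂ) : ℂ := if p.eval z = 0 then z else RN p z

theorem rnmStep_of_root {z : ℂ} (hz : p.eval z = 0) : rnmStep p z = z := if_pos hz

theorem rnmStep_of_ne_root {z : ℂ} (hz : p.eval z ≠ 0) : rnmStep p z = RN p z := if_neg hz

theorem rnmOrbit_eq_iterate (z₀ : ℂ) : rnmOrbit p z₀ = fun t => (rnmStep p)^[t] z₀ := by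
  funext t
  induction t with
  | zero => rfl
  | succ t ih => rw [Function.iterate_succ_apply', ← ih, rnmOrbit, rnmStep]

theorem isCompact_setOf_norm_eval_le (hp : 0 < p.natDegree) (K : ℝ) :
    IsCompact {z : ℂ | ‖p.eval z‖ ≤ K} := by
  simpa [Set.preimage, mem_closedBall_zero_iff] using
    (p.isProperMap_eval (natDegree_pos_iff_degree_pos.mp hp)).isCompact_preimage
      (isCompact_closedBall (0 : ℂ) K)

theorem exists_uniform_contraction (hp : 0 < p.natDegree) {K : ℝ}
    (hcrit : ∀ z, ‖p.eval z‖ ≤ K → p.derivative.eval z ≠ 0) :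
    ∃ q : ℝ, 0 ≤ q ∧ q < 1 ∧
      ∀ z, ‖p.eval z‖ ≤ K → ‖p.eval (rnmStep p z)‖ ≤ q * ‖p.eval z‖ := by
  have hA (z : ℂ) : Amax p z ≠ 0 := (Amax_pos z (ne_zero_of_natDegree_gt hp)).ne'
  have hcont : Continuous fun z => ‖p.derivative.eval z‖ ^ 2 / (72 * Amax p z ^ 2) :=
    (p.derivative.continuous.norm.pow 2).div (((continuous_Amax p).pow 2).const_mul 72)
      fun z => mul_ne_zero (by norm_num) (pow_ne_zero 2 (hA z))
  obtain ⟨ε, hε, hrate⟩ := (isCompact_setOf_norm_eval_le hp K).exists_forall_le' hcont.continuousOn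
    (a := 0) fun z hz => by
      have hb := hcrit z hz
      have hAz := hA z
      positivity
  refine ⟨max (1 - ε) 0, le_max_right _ _, max_lt (by linarith) one_pos, fun z hz => ?_⟩
  by_cases hroot : p.eval z = 0
  · simp [rnmStep_of_root hroot, hroot]
  · rw [rnmStep_of_ne_root hroot]
    refine (norm_eval_RN_le_of_noncritical hroot (hcrit z hz)).trans ?_
    gcongr
    exact (sub_le_sub_left (hrate z hz) 1).trans (le_max_left _ _)

theorem dist_rnmStep_le_of_noncritical {z : ℂ} (hz' : p.derivative.eval z ≠ 0) :
    dist z (rnmStep p z) ≤ 1 / (9 * ‖p.leadingCoeff‖) * ‖p.eval z‖ := by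
  by_cases hroot : p.eval z = 0
  · simp [rnmStep_of_root hroot, hroot]
  · rw [rnmStep_of_ne_root hroot, dist_comm, dist_eq_norm]
    exact norm_RN_sub_self_le_of_noncritical hroot hz'

theorem exists_tendsto_rnmOrbit_of_noncritical_sublevel (hp : 0 < p.natDegree) {z₀ : ℂ}
    (hcrit : ∀ z, ‖p.eval z‖ ≤ ‖p.eval z₀‖ → p.derivative.eval z ≠ 0) :
    ∃ θ, p.eval θ = 0 ∧ Tendsto (rnmOrbit p z₀) atTop (𝓝 θ) := by
  obtain ⟨q, hq0, hq1, hcontr⟩ := exists_uniform_contraction hp hcrit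
  have hinv : Set.MapsTo (rnmStep p) {z | ‖p.eval z‖ ≤ ‖p.eval z₀‖}
      {z | ‖p.eval z‖ ≤ ‖p.eval z₀‖} := fun z hz => (hcontr z hz).trans <|
      (mul_le_of_le_one_left (norm_nonneg _) hq1.le).trans hz
  rw [rnmOrbit_eq_iterate]
  exact exists_tendsto_iterate_of_norm_contraction p.continuous hinv hq0 hq1 (by positivity) hcontr
    (fun z hz => dist_rnmStep_le_of_noncritical (hcrit z hz)) (le_refl ‖p.eval z₀‖)

theorem tendsto_rnmOrbit_of_tendsto_rnmOrbit_rnmStep {z₀ θ : ℂ}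
    (h : Tendsto (rnmOrbit p (rnmStep p z₀)) atTop (𝓝 θ)) :
    Tendsto (rnmOrbit p z₀) atTop (𝓝 θ) := by
  rw [rnmOrbit_eq_iterate] at h ⊢
  exact (tendsto_add_atTop_iff_nat 1).mp h

theorem tendsto_rnmOrbit_of_root {θ : ℂ} (hθ : p.eval θ = 0) :
    Tendsto (rnmOrbit p θ) atTop (𝓝 θ) := by
  simp_rw [rnmOrbit_eq_iterate, Function.iterate_fixed (rnmStep_of_root hθ)]
  exact tendsto_const_nhds

end Orbit

theorem rnm_cubic_general (p : ℂ[X]) (hp : 0 < p.natDegree) (c : ℂ)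
    (hmin : ∀ w : ℂ, p.derivative.eval w = 0 → ‖p.eval c‖ ≤ ‖p.eval w‖) :
    ∃ θstar : ℂ, p.eval θstar = 0 ∧ Tendsto (rnmOrbit p c) atTop (𝓝 θstar) := by
  by_cases hc : p.eval c = 0
  · exact ⟨c, hc, tendsto_rnmOrbit_of_root hc⟩
  have hlt : ‖p.eval (rnmStep p c)‖ < ‖p.eval c‖ := by
    rw [rnmStep_of_ne_root hc]
    exact norm_eval_RN_lt hp hc
  obtain ⟨θ, hθ, hlim⟩ := exists_tendsto_rnmOrbit_of_noncritical_sublevel hp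
    fun z hz hcrit => (hz.trans_lt hlt).not_ge (hmin z hcrit)
  exact ⟨θ, hθ, tendsto_rnmOrbit_of_tendsto_rnmOrbit_rnmStep hlim⟩

/-- **Solving cubics via RNM.** Let `p(z) = a₃z³ + a₂z² + a₁z + a₀` with `a₃ ≠ 0` and let
`c` be a critical point of `p` of smallest polynomial modulus among all critical points.
Then the RNM orbit of `c` converges to a root of `p`. -/
theorem rnm_cubic (a₃ a₂ a₁ a₀ : ℂ) (h3 : a₃ ≠ 0)
    (p : Polynomial ℂ) (hp : p = C a₃ * X ^ 3 + C a₂ * X ^ 2 + C a₁ * X + C a₀)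
    (c : ℂ) (hc : p.derivative.eval c = 0)
    (hmin : ∀ w : ℂ, p.derivative.eval w = 0 →
      ‖p.eval c‖ ≤ ‖p.eval w‖) :
    ∃ θstar : ℂ, p.eval θstar = 0 ∧
      Filter.Tendsto (rnmOrbit p c) Filter.atTop (nhds θstar) :=
  rnm_cubic_general p (by rw [hp, natDegree_cubic h3]; exact three_pos) c hmin
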